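/- Let R, B, S be finite-valued random variables on a probability space with negative interaction information I(R;B;S) < 0, and let C_RB, C_RS, C_BS be real numbers (causal strengths) satisfying the Janzing–Balduzzi–Grosse-Wentrup–Schölkopf inequalities C_RB = I(R;B), C_RS ≥ I(R;S|B), and C_BS ≥ I(B;S|R). If min{C_RB, C_RS, C_BS} < |I(R;B;S)|, then C_RB < |I(R;B;S)|, while C_RS ≥ |I(R;B;S)| and C_BS ≥ |I(R;B;S)|; that is, only the causal influence from the root variable to the bridge variable is weak. -/

import Mathlib

open MeasureTheory

/-- Shannon entropy of a finite-valued random variable `X` under the measure `μ`,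
with the convention `0 * log 0 = 0` (note `Real.log 0 = 0` in Mathlib). -/
noncomputable def entropy {Ω α : Type*} [MeasurableSpace Ω] [Fintype α]
    (μ : Measure Ω) (X : Ω → α) : ℝ :=
  - ∑ x : α, (μ (X ⁻¹' {x})).toReal * Real.log (μ (X ⁻¹' {x})).toReal

/-- Mutual information `I(X;Y) = H(X) + H(Y) - H(X,Y)` of finite-valued random variables. -/
noncomputable def mutualInfo {Ω α β : Type*} [MeasurableSpace Ω] [Fintype α] [Fintype β]
    (μ : Measure Ω) (X : Ω → α) (Y : Ω → β) : ℝ :=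
  entropy μ X + entropy μ Y - entropy μ (fun ω => (X ω, Y ω))

/-- Conditional mutual information
`I(X;Y|Z) = H(X,Z) + H(Y,Z) - H(X,Y,Z) - H(Z)` of finite-valued random variables. -/
noncomputable def condMutualInfo {Ω α β γ : Type*} [MeasurableSpace Ω]
    [Fintype α] [Fintype β] [Fintype γ]
    (μ : Measure Ω) (X : Ω → α) (Y : Ω → β) (Z : Ω → γ) : ℝ :=
  entropy μ (fun ω => (X ω, Z ω)) + entropy μ (fun ω => (Y ω, Z ω))
    - entropy μ (fun ω => (X ω, Y ω, Z ω)) - entropy μ Z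

/-- Interaction information `I(X;Y;Z) = I(X;Y) - I(X;Y|Z)`. -/
noncomputable def interactionInfo {Ω α β γ : Type*} [MeasurableSpace Ω]
    [Fintype α] [Fintype β] [Fintype γ]
    (μ : Measure Ω) (X : Ω → α) (Y : Ω → β) (Z : Ω → γ) : ℝ :=
  mutualInfo μ X Y - condMutualInfo μ X Y Z

/-! Mutual information is the Kullback–Leibler divergence of the joint law from the product of the
marginals, hence nonnegative. Interaction information is symmetric in its three arguments, so
`I(R;S|B) = I(R;S) - I(R;B;S)` and `I(B;S|R) = I(B;S) - I(R;B;S)`. When `I(R;B;S)` is negative, both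
are therefore at least `|I(R;B;S)|`, which leaves the arrow from `R` to `B` as the only one that can
be weak. -/

open InformationTheory

lemma mul_log_div_mul {p a b : ℝ} (ha : a = 0 → p = 0) (hb : b = 0 → p = 0) :
    p * Real.log (p / (a * b)) = p * Real.log p - p * Real.log a - p * Real.log b := by
  by_cases hp : p = 0
  · simp only [hp, zero_mul, sub_zero]
  · have ha' : a ≠ 0 := mt ha hp
    have hb' : b ≠ 0 := mt hb hp
    rw [Real.log_div hp (mul_ne_zero ha' hb'), Real.log_mul ha' hb']
    ring

section Discrete

variable {α : Type*} [MeasurableSpace α]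

lemma absolutelyContinuous_of_forall_singleton [Countable α] {μ ν : Measure α}
    (h : ∀ x, ν {x} = 0 → μ {x} = 0) : μ ≪ ν := by
  intro s hs
  rw [measure_null_iff_singleton s.to_countable]
  exact fun x hx => h x (measure_mono_null (Set.singleton_subset_iff.mpr hx) hs)

variable [MeasurableSingletonClass α]

lemma rnDeriv_mul_measure_singleton {μ ν : Measure α} [μ.HaveLebesgueDecomposition ν]
    (hμν : μ ≪ ν) (x : α) : μ.rnDeriv ν x * ν {x} = μ {x} := by
  rw [← Measure.setLIntegral_rnDeriv' hμν (measurableSet_singleton x), lintegral_singleton]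

lemma llr_eq_log_div_measureReal_singleton {μ ν : Measure α} [μ.HaveLebesgueDecomposition ν]
    (hμν : μ ≪ ν) {x : α} (hx : ν.real {x} ≠ 0) :
    llr μ ν x = Real.log (μ.real {x} / ν.real {x}) := by
  rw [llr, measureReal_def μ, ← rnDeriv_mul_measure_singleton hμν x, ENNReal.toReal_mul,
    ← measureReal_def, mul_div_cancel_right₀ _ hx]

lemma toReal_klDiv_eq_sum [Fintype α] {μ ν : Measure α} [IsFiniteMeasure μ]
    (hμν : μ ≪ ν) (huniv : μ Set.univ = ν Set.univ) :
    (klDiv μ ν).toReal = ∑ x, μ.real {x} * Real.log (μ.real {x} / ν.real {x}) := by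
  have : IsFiniteMeasure ν := ⟨huniv ▸ measure_lt_top μ Set.univ⟩
  rw [toReal_klDiv_of_measure_eq hμν huniv, integral_fintype .of_finite]
  refine Finset.sum_congr rfl fun x _ => ?_
  by_cases hx : ν.real {x} = 0
  · have hμx : μ.real {x} = 0 := by
      rw [measureReal_eq_zero_iff] at hx ⊢
      exact hμν hx
    simp only [hμx, zero_smul, zero_mul]
  · rw [llr_eq_log_div_measureReal_singleton hμν hx, smul_eq_mul]

end Discrete

lemma map_prodMk_absolutelyContinuous_prod_map {Ω α β : Type*}
    [MeasurableSpace Ω] [Countable α] [MeasurableSpace α] [MeasurableSingletonClass α]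
    [Countable β] [MeasurableSpace β] [MeasurableSingletonClass β]
    {μ : Measure Ω} [SFinite μ] {X : Ω → α} {Y : Ω → β} (hX : Measurable X) (hY : Measurable Y) :
    μ.map (fun ω => (X ω, Y ω)) ≪ (μ.map X).prod (μ.map Y) := by
  refine absolutelyContinuous_of_forall_singleton fun z hz => ?_
  rw [← Set.singleton_prod_singleton, Measure.prod_prod, mul_eq_zero,
    Measure.map_apply hX (measurableSet_singleton _),
    Measure.map_apply hY (measurableSet_singleton _)] at hz
  rw [Measure.map_apply (hX.prodMk hY) (measurableSet_singleton _)]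
  refine hz.elim (measure_mono_null ?_) (measure_mono_null ?_)
  · exact fun ω hω => congrArg Prod.fst hω
  · exact fun ω hω => congrArg Prod.snd hω

section FiniteValued

variable {Ω α β γ : Type*} [MeasurableSpace Ω] [Fintype α] [Fintype β] [Fintype γ]

lemma entropy_equiv_comp (μ : Measure Ω) (X : Ω → α) (e : α ≃ β) :
    entropy μ (e ∘ X) = entropy μ X := by
  have hpre (x : α) : (e ∘ X) ⁻¹' {e x} = X ⁻¹' {x} := by
    ext ω; simp
  simp only [entropy, ← e.sum_comp, hpre]

lemma entropy_prodMk_comm (μ : Measure Ω) (X : Ω → α) (Y : Ω → β) :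
    entropy μ (fun ω => (X ω, Y ω)) = entropy μ (fun ω => (Y ω, X ω)) :=
  entropy_equiv_comp μ (fun ω => (Y ω, X ω)) (Equiv.prodComm β α)

lemma entropy_prodMk_left_comm (μ : Measure Ω) (X : Ω → α) (Y : Ω → β) (Z : Ω → γ) :
    entropy μ (fun ω => (X ω, Y ω, Z ω)) = entropy μ (fun ω => (Y ω, X ω, Z ω)) :=
  entropy_equiv_comp μ (fun ω => (Y ω, X ω, Z ω))
    ((Equiv.prodAssoc β α γ).symm.trans
      (((Equiv.prodComm β α).prodCongr (Equiv.refl γ)).trans (Equiv.prodAssoc α β γ)))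

lemma entropy_prodMk_right_comm (μ : Measure Ω) (X : Ω → α) (Y : Ω → β) (Z : Ω → γ) :
    entropy μ (fun ω => (X ω, Y ω, Z ω)) = entropy μ (fun ω => (X ω, Z ω, Y ω)) :=
  entropy_equiv_comp μ (fun ω => (X ω, Z ω, Y ω)) ((Equiv.refl α).prodCongr (Equiv.prodComm γ β))

lemma mutualInfo_comm (μ : Measure Ω) (X : Ω → α) (Y : Ω → β) :
    mutualInfo μ X Y = mutualInfo μ Y X := by
  rw [mutualInfo, mutualInfo, entropy_prodMk_comm μ X Y, add_comm (entropy μ X)]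

lemma condMutualInfo_comm (μ : Measure Ω) (X : Ω → α) (Y : Ω → β) (Z : Ω → γ) :
    condMutualInfo μ X Y Z = condMutualInfo μ Y X Z := by
  rw [condMutualInfo, condMutualInfo, entropy_prodMk_left_comm μ X Y Z,
    add_comm (entropy μ fun ω => (X ω, Z ω))]

lemma interactionInfo_left_comm (μ : Measure Ω) (X : Ω → α) (Y : Ω → β) (Z : Ω → γ) :
    interactionInfo μ X Y Z = interactionInfo μ Y X Z := by
  rw [interactionInfo, interactionInfo, mutualInfo_comm μ X Y, condMutualInfo_comm μ X Y Z]

lemma interactionInfo_right_comm (μ : Measure Ω) (X : Ω → α) (Y : Ω → β) (Z : Ω → γ) :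
    interactionInfo μ X Y Z = interactionInfo μ X Z Y := by
  simp only [interactionInfo, mutualInfo, condMutualInfo, entropy_prodMk_comm μ Y Z,
    entropy_prodMk_right_comm μ X Y Z]
  ring

lemma entropy_comp_eq_neg_sum [MeasurableSpace α] [MeasurableSingletonClass α]
    {μ : Measure Ω} [IsFiniteMeasure μ] {X : Ω → α} (hX : Measurable X) (f : α → β) :
    entropy μ (f ∘ X) =
      -∑ x, μ.real (X ⁻¹' {x}) * Real.log (μ.real ((f ∘ X) ⁻¹' {f x})) := by
  classical
  have hfiber (y : β) : μ.real ((f ∘ X) ⁻¹' {y}) = ∑ x with f x = y, μ.real (X ⁻¹' {x}) := by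
    rw [sum_measureReal_preimage_singleton _ fun x _ => hX (measurableSet_singleton x)]
    congr 1
    ext ω
    simp
  rw [entropy, neg_inj, ← Finset.sum_fiberwise Finset.univ f]
  refine Finset.sum_congr rfl fun y _ => ?_
  calc μ.real ((f ∘ X) ⁻¹' {y}) * Real.log (μ.real ((f ∘ X) ⁻¹' {y}))
      = ∑ x with f x = y, μ.real (X ⁻¹' {x}) * Real.log (μ.real ((f ∘ X) ⁻¹' {y})) := by
        rw [← Finset.sum_mul, ← hfiber]
    _ = ∑ x with f x = y, μ.real (X ⁻¹' {x}) * Real.log (μ.real ((f ∘ X) ⁻¹' {f x})) :=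
        Finset.sum_congr rfl fun x hx => by rw [(Finset.mem_filter.mp hx).2]

variable [MeasurableSpace α] [MeasurableSingletonClass α]
  [MeasurableSpace β] [MeasurableSingletonClass β]
  {μ : Measure Ω} [IsProbabilityMeasure μ] {X : Ω → α} {Y : Ω → β}

theorem mutualInfo_eq_toReal_klDiv (hX : Measurable X) (hY : Measurable Y) :
    mutualInfo μ X Y =
      (klDiv (μ.map fun ω => (X ω, Y ω)) ((μ.map X).prod (μ.map Y))).toReal := by
  have hXY : Measurable fun ω => (X ω, Y ω) := hX.prodMk hY
  have := Measure.isProbabilityMeasure_map (μ := μ) hX.aemeasurable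
  have := Measure.isProbabilityMeasure_map (μ := μ) hY.aemeasurable
  have := Measure.isProbabilityMeasure_map (μ := μ) hXY.aemeasurable
  let p : α × β → ℝ := fun z => μ.real ((fun ω => (X ω, Y ω)) ⁻¹' {z})
  let a : α → ℝ := fun x => μ.real (X ⁻¹' {x})
  let b : β → ℝ := fun y => μ.real (Y ⁻¹' {y})
  have hterm (z : α × β) : p z * Real.log (p z / (a z.1 * b z.2)) =
      p z * Real.log (p z) - p z * Real.log (a z.1) - p z * Real.log (b z.2) := by
    refine mul_log_div_mul (measureReal_mono_null ?_) (measureReal_mono_null ?_)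
    · exact fun ω hω => congrArg Prod.fst hω
    · exact fun ω hω => congrArg Prod.snd hω
  have hentropy : entropy μ (fun ω => (X ω, Y ω)) = -∑ z, p z * Real.log (p z) := rfl
  have hentropyX : entropy μ X = -∑ z, p z * Real.log (a z.1) :=
    entropy_comp_eq_neg_sum hXY Prod.fst
  have hentropyY : entropy μ Y = -∑ z, p z * Real.log (b z.2) :=
    entropy_comp_eq_neg_sum hXY Prod.snd
  have hpz (z : α × β) : (μ.map fun ω => (X ω, Y ω)).real {z} = p z :=
    map_measureReal_apply hXY (measurableSet_singleton z)
  have habz (z : α × β) : ((μ.map X).prod (μ.map Y)).real {z} = a z.1 * b z.2 := by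
    rw [← Set.singleton_prod_singleton, measureReal_prod_prod,
      map_measureReal_apply hX (measurableSet_singleton _),
      map_measureReal_apply hY (measurableSet_singleton _)]
  rw [toReal_klDiv_eq_sum (map_prodMk_absolutelyContinuous_prod_map hX hY)
    (measure_univ.trans measure_univ.symm)]
  simp only [hpz, habz, hterm, Finset.sum_sub_distrib, mutualInfo, hentropy, hentropyX, hentropyY]
  ring

theorem mutualInfo_nonneg (hX : Measurable X) (hY : Measurable Y) : 0 ≤ mutualInfo μ X Y := by
  rw [mutualInfo_eq_toReal_klDiv hX hY]
  exact ENNReal.toReal_nonneg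

lemma abs_interactionInfo_le_condMutualInfo {Z : Ω → γ} (hX : Measurable X) (hY : Measurable Y)
    (h : interactionInfo μ X Y Z ≤ 0) :
    |interactionInfo μ X Y Z| ≤ condMutualInfo μ X Y Z := by
  have hXY : 0 ≤ mutualInfo μ X Y := mutualInfo_nonneg hX hY
  rw [abs_of_nonpos h, interactionInfo]
  linarith

end FiniteValued

/-- in a triangle DAG with negative interaction information, if the
weakest causal strength is below `|I(R;B;S)|`, then only the root-to-bridge
influence is weak. -/
theorem only_root_to_bridge_weak {Ω α β γ : Type*} [MeasurableSpace Ω]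
    [Fintype α] [MeasurableSpace α] [MeasurableSingletonClass α]
    [Fintype β] [MeasurableSpace β] [MeasurableSingletonClass β]
    [Fintype γ] [MeasurableSpace γ] [MeasurableSingletonClass γ]
    (μ : MeasureTheory.Measure Ω) [MeasureTheory.IsProbabilityMeasure μ]
    (R : Ω → α) (B : Ω → β) (S : Ω → γ)
    (hR : Measurable R) (hB : Measurable B) (hS : Measurable S)
    (hneg : interactionInfo μ R B S < 0)
    (C_RB C_RS C_BS : ℝ)
    (hRB : C_RB = mutualInfo μ R B)
    (hRS : C_RS ≥ condMutualInfo μ R S B)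
    (hBS : C_BS ≥ condMutualInfo μ B S R)
    (hmin : min C_RB (min C_RS C_BS) < |interactionInfo μ R B S|) :
    C_RB < |interactionInfo μ R B S|
    ∧ C_RS ≥ |interactionInfo μ R B S|
    ∧ C_BS ≥ |interactionInfo μ R B S| := by
  have hRS_strong : |interactionInfo μ R B S| ≤ C_RS := by
    rw [interactionInfo_right_comm] at hneg ⊢
    exact (abs_interactionInfo_le_condMutualInfo hR hS hneg.le).trans hRS
  have hBS_strong : |interactionInfo μ R B S| ≤ C_BS := by
    rw [interactionInfo_left_comm, interactionInfo_right_comm] at hneg ⊢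
    exact (abs_interactionInfo_le_condMutualInfo hB hS hneg.le).trans hBS
  have hRB_weak : C_RB < |interactionInfo μ R B S| :=
    (min_lt_iff.mp hmin).resolve_right (le_min hRS_strong hBS_strong).not_gt
  exact ⟨hRB_weak, hRS_strong, hBS_strong⟩
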